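/- arXiv:2303.06717 — 2 statements merged into one kernel-verified Lean document; each statement's English description precedes it below -/
import Mathlib

section
/- Let d ≥ 1, let C = C₁ × ⋯ × C_d ⊆ ℤ^d with C_i = [1,n_i]. A pair (A,B) of finite subsets of ℤ^d satisfies A + B = C with |proj_i(A)| = α_i for all i and |C| = |A|·|B| if and only if A = A₁ × A₂ × ⋯ × A_d and B = B₁ × ⋯ × B_d where each (A_i, B_i) is a valid tiling of C_i with |A_i| = α_i. Consequently |T((α₁,...,α_d), C)| = ∏_{i=1}^d |T(α_i, C_i)|. -/
open Finset Pointwise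

/-- Canonical 1-dimensional tilings of `[1,n]` with tile size `α`. -/
def CanT1 (α n : ℕ) : Set (Finset ℤ × Finset ℤ) :=
  {p | p.1 + p.2 = Finset.Icc 1 (n : ℤ) ∧ p.1.card = α ∧
    (Finset.Icc 1 (n : ℤ)).card = p.1.card * p.2.card ∧
    (0 : ℤ) ∈ p.2 ∧ ∀ b ∈ p.2, 0 ≤ b}

/-- Canonical `d`-dimensional tilings of `C = [1,n₁] × ⋯ × [1,n_d]` with coordinate
projection sizes `α i`. -/
def CanTd (d : ℕ) (nn α : Fin d → ℕ) :
    Set (Finset (Fin d → ℤ) × Finset (Fin d → ℤ)) :=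
  {p | p.1 + p.2 = Fintype.piFinset (fun i => Finset.Icc 1 (nn i : ℤ)) ∧
    (∀ i, (p.1.image (fun x => x i)).card = α i) ∧
    (Fintype.piFinset (fun i => Finset.Icc 1 (nn i : ℤ))).card = p.1.card * p.2.card ∧
    (0 : Fin d → ℤ) ∈ p.2 ∧ ∀ b ∈ p.2, ∀ i, 0 ≤ b i}


/-!
Translate `A` and `B` into the nonnegative orthant and pass to generating polynomials: a tiling
`(A, B)` of `∏ i, C i` becomes a factorization of `∏ i, P i (X i)`, where `P i` is the univariate
generating polynomial of `C i`. Fix a coordinate `i`. By unique factorization a divisor of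
`P i (X i) * ∏ j ≠ i, P j (X j)` is a product of a divisor of each of the two factors, and a divisor
of a nonzero polynomial involves no new variables. So the generating polynomial of `A` is
`u * v` with `u` in `X i` only and `v` free of `X i`, which means that membership in `A` is a
condition on the `i`-th coordinate together with a condition on the others. As this holds for every
`i`, the set `A` is the product of its projections, and likewise `B`.
-/

open MvPolynomial
open Fintype (piFinset)

section Polynomials

variable {σ R : Type*}

theorem mem_supported_of_dvd [CommSemiring R] [NoZeroDivisors R] {s : Set σ}
    {f g : MvPolynomial σ R} (hg : g ∈ supported R s) (hg0 : g ≠ 0) (hfg : f ∣ g) :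
    f ∈ supported R s := by
  obtain ⟨h, rfl⟩ := hfg
  rw [mem_supported] at hg ⊢
  refine fun i hi => hg ?_
  rw [SetLike.mem_coe, mem_vars_iff_degreeOf_ne_zero] at hi ⊢
  rw [degreeOf_mul_eq (left_ne_zero_of_mul hg0) (right_ne_zero_of_mul hg0)]
  omega

theorem filter_eq_self_of_mem_supported [CommSemiring R] {s : Set σ} [DecidablePred (· ∈ s)]
    {f : MvPolynomial σ R} (hf : f ∈ supported R s) {m : σ →₀ ℕ} (hm : coeff m f ≠ 0) :
    m.filter (· ∈ s) = m :=
  (Finsupp.filter_eq_self_iff _ _).2 fun _ hi => mem_supported.1 hf <|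
    (mem_vars_iff_mem_support _).2 ⟨m, mem_support_iff.2 hm, Finsupp.mem_support_iff.2 hi⟩

theorem coeff_mul_of_mem_supported [CommSemiring R] {s : Set σ} [DecidablePred (· ∈ s)]
    {f g : MvPolynomial σ R} (hf : f ∈ supported R s) (hg : g ∈ supported R sᶜ) (m : σ →₀ ℕ) :
    coeff m (f * g) = coeff (m.filter (· ∈ s)) f * coeff (m.filter (· ∉ s)) g := by
  classical
  rw [coeff_mul, Finset.sum_eq_single (m.filter (· ∈ s), m.filter (· ∉ s))]
  · rintro ⟨p, q⟩ hpq hne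
    rw [HasAntidiagonal.mem_antidiagonal] at hpq
    by_contra h0
    dsimp only at hpq h0
    have hp := filter_eq_self_of_mem_supported hf (left_ne_zero_of_mul h0)
    have hq : q.filter (· ∉ s) = q :=
      filter_eq_self_of_mem_supported hg (right_ne_zero_of_mul h0)
    have hp' : p.filter (· ∉ s) = 0 := by
      rw [← hp, Finsupp.filter_eq_zero_iff]
      exact fun _ hi => Finsupp.filter_apply_neg _ _ hi
    have hq' : q.filter (· ∈ s) = 0 := by
      rw [← hq, Finsupp.filter_eq_zero_iff]
      exact fun _ hi => Finsupp.filter_apply_neg _ _ (not_not_intro hi)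
    simp [← hpq, Finsupp.filter_add, hp, hq, hp', hq'] at hne
  · simp [Finsupp.filter_add_filter_not]

theorem filter_add_filter_mem_support_of_dvd [CommRing R] [IsDomain R]
    [UniqueFactorizationMonoid R] {s : Set σ} [DecidablePred (· ∈ s)] {f g h : MvPolynomial σ R}
    (hg : g ∈ supported R s) (hh : h ∈ supported R sᶜ) (hgh : g * h ≠ 0) (hf : f ∣ g * h)
    {m n : σ →₀ ℕ} (hm : m ∈ f.support) (hn : n ∈ f.support) :
    m.filter (· ∈ s) + n.filter (· ∉ s) ∈ f.support := by
  obtain ⟨u, v, hug, hvh, rfl⟩ := exists_dvd_and_dvd_of_dvd_mul hf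
  have hu := mem_supported_of_dvd hg (left_ne_zero_of_mul hgh) hug
  have hv := mem_supported_of_dvd hh (right_ne_zero_of_mul hgh) hvh
  rw [mem_support_iff, coeff_mul_of_mem_supported hu hv] at hm hn ⊢
  convert mul_ne_zero (left_ne_zero_of_mul hm) (right_ne_zero_of_mul hn) using 3 <;>
  · ext i
    by_cases hi : i ∈ s <;> simp [hi]

end Polynomials

section Boxes

variable {ι : Type*} [Fintype ι] [DecidableEq ι]

theorem eq_piFinset_image_of_update_mem {G : ι → Type*} [∀ i, DecidableEq (G i)]
    {A : Finset (∀ i, G i)} (hA : A.Nonempty)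
    (hupdate : ∀ i, ∀ x ∈ A, ∀ y ∈ A, Function.update y i (x i) ∈ A) :
    A = piFinset fun i => A.image (· i) := by
  ext z
  rw [Fintype.mem_piFinset]
  refine ⟨fun hz i => mem_image_of_mem (· i) hz, fun hz => ?_⟩
  have agrees_on : ∀ s : Finset ι, ∃ a ∈ A, ∀ i ∈ s, a i = z i := by
    intro s
    induction s using Finset.induction_on with
    | empty => exact hA.imp fun a ha => ⟨ha, by simp⟩
    | insert i s _ ih =>
      obtain ⟨a, ha, has⟩ := ih
      obtain ⟨x, hx, hxz⟩ := mem_image.1 (hz i)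
      refine ⟨Function.update a i (x i), hupdate i x hx a ha, fun j hj => ?_⟩
      obtain rfl | hji := eq_or_ne j i
      · simpa using hxz
      · rw [Function.update_of_ne hji]
        exact has j (mem_of_mem_insert_of_ne hj hji)
  obtain ⟨a, ha, haz⟩ := agrees_on univ
  rwa [← funext fun i => haz i (mem_univ i)]

theorem piFinset_injOn_nonempty {G : ι → Type*} :
    Set.InjOn (piFinset (δ := G)) {S | ∀ i, (S i).Nonempty} := by
  classical
  intro S hS T hT hST
  funext i
  rw [← Fintype.eval_image_piFinset S i fun j _ => hS j, hST,
    Fintype.eval_image_piFinset T i fun j _ => hT j]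

theorem isLeast_piFinset_iff {G : ι → Type*} [∀ i, Preorder (G i)] {S : ∀ i, Finset (G i)}
    {a : ∀ i, G i} :
    IsLeast (piFinset S : Set (∀ i, G i)) a ↔ ∀ i, IsLeast (S i : Set (G i)) (a i) := by
  simp only [IsLeast, mem_lowerBounds, Finset.mem_coe, Fintype.mem_piFinset]
  refine ⟨fun ⟨ha, hle⟩ i => ⟨ha i, fun b hb => ?_⟩,
    fun h => ⟨fun i => (h i).1, fun b hb i => (h i).2 _ (hb i)⟩⟩
  have := hle (Function.update a i b) fun j => ?_
  · simpa using this i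
  · obtain rfl | hji := eq_or_ne j i
    · simpa using hb
    · simpa [hji] using ha j

end Boxes

/-- `(A, B)` is a tiling of `C`: every element of `C` is uniquely of the form `a + b` with `a ∈ A`
and `b ∈ B`. Uniqueness is encoded by the cardinality condition. -/
structure IsTiling {G : Type*} [Add G] [DecidableEq G] (A B C : Finset G) : Prop where
  add_eq : A + B = C
  card_eq : #C = #A * #B

theorem isTiling_iff {G : Type*} [Add G] [DecidableEq G] {A B C : Finset G} :
    IsTiling A B C ↔ A + B = C ∧ #C = #A * #B :=
  ⟨fun h => ⟨h.add_eq, h.card_eq⟩, fun h => ⟨h.1, h.2⟩⟩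

namespace IsTiling

theorem symm {G : Type*} [AddCommSemigroup G] [DecidableEq G] {A B C : Finset G}
    (h : IsTiling A B C) : IsTiling B A C :=
  ⟨add_comm A B ▸ h.add_eq, mul_comm #A #B ▸ h.card_eq⟩

variable {G : Type*} [Add G] [DecidableEq G] {A B C : Finset G}

theorem injOn (h : IsTiling A B C) : (A ×ˢ B : Set (G × G)).InjOn fun p => p.1 + p.2 :=
  card_add_iff.1 (h.add_eq ▸ h.card_eq)

theorem nonempty_left (h : IsTiling A B C) (hC : C.Nonempty) : A.Nonempty :=
  (add_nonempty.1 (h.add_eq ▸ hC)).1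

theorem nonempty_right (h : IsTiling A B C) (hC : C.Nonempty) : B.Nonempty :=
  (add_nonempty.1 (h.add_eq ▸ hC)).2

end IsTiling

section GeneratingPolynomial

variable {ι : Type*} [Fintype ι]

/-- The exponent vector `a - v`, meaningful for `v ≤ a`: `Int.toNat` truncates otherwise. -/
noncomputable def shiftedExponent (v a : ι → ℤ) : ι →₀ ℕ :=
  Finsupp.equivFunOnFinite.symm fun i => (a i - v i).toNat

@[simp]
theorem shiftedExponent_apply (v a : ι → ℤ) (i : ι) :
    shiftedExponent v a i = (a i - v i).toNat := rfl

theorem shiftedExponent_injOn (v : ι → ℤ) : Set.InjOn (shiftedExponent v) (Set.Ici v) := by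
  intro a ha b hb hab
  ext i
  have hi := DFunLike.congr_fun hab i
  simp only [shiftedExponent_apply] at hi
  have hva : v i ≤ a i := ha i
  have hvb : v i ≤ b i := hb i
  omega

theorem shiftedExponent_add {v w a b : ι → ℤ} (ha : v ≤ a) (hb : w ≤ b) :
    shiftedExponent (v + w) (a + b) = shiftedExponent v a + shiftedExponent w b := by
  ext i
  have hva : v i ≤ a i := ha i
  have hwb : w i ≤ b i := hb i
  simp only [shiftedExponent_apply, Finsupp.add_apply, Pi.add_apply]
  omega

/-- The generating polynomial `∑_{a ∈ A} X ^ (a - v)` of a finite set `A` of integer vectors.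
The shift by a lower bound `v` of `A` keeps the exponents natural. -/
noncomputable def genPoly (v : ι → ℤ) (A : Finset (ι → ℤ)) : MvPolynomial ι ℤ :=
  ∑ a ∈ A, monomial (shiftedExponent v a) 1

theorem shiftedExponent_mem_support_genPoly {v z : ι → ℤ} {A : Finset (ι → ℤ)}
    (hA : v ∈ lowerBounds (A : Set (ι → ℤ))) (hz : v ≤ z) :
    shiftedExponent v z ∈ (genPoly v A).support ↔ z ∈ A := by
  classical
  have hcoeff : coeff (shiftedExponent v z) (genPoly v A) = if z ∈ A then 1 else 0 := by
    simp only [genPoly, coeff_sum, coeff_monomial]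
    rw [← sum_ite_eq' A z fun _ => (1 : ℤ)]
    exact sum_congr rfl fun a ha =>
      if_congr ((shiftedExponent_injOn v).eq_iff (hA ha) hz) rfl rfl
  simp [mem_support_iff, hcoeff]

theorem IsTiling.genPoly_mul {A B C : Finset (ι → ℤ)} (h : IsTiling A B C) {v w : ι → ℤ}
    (hA : v ∈ lowerBounds (A : Set (ι → ℤ))) (hB : w ∈ lowerBounds (B : Set (ι → ℤ))) :
    genPoly v A * genPoly w B = genPoly (v + w) C := by
  have hinj : Set.InjOn (fun p : (ι → ℤ) × (ι → ℤ) => p.1 + p.2) (A ×ˢ B : Finset _) := by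
    simpa using h.injOn
  rw [genPoly, genPoly, genPoly, ← h.add_eq, add_def, sum_image hinj, sum_mul_sum, ← sum_product']
  refine sum_congr rfl fun p hp => ?_
  rw [mem_product] at hp
  rw [monomial_mul, one_mul, shiftedExponent_add (hA hp.1) (hB hp.2)]

variable [DecidableEq ι]

theorem genPoly_piFinset (v : ι → ℤ) (C : ι → Finset ℤ) :
    genPoly v (piFinset C) = ∏ i, ∑ c ∈ C i, X i ^ (c - v i).toNat := by
  rw [prod_univ_sum, genPoly]
  refine sum_congr rfl fun c _ => ?_
  rw [monomial_eq, C_1, one_mul, Finsupp.prod_fintype _ _ fun i => pow_zero _]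
  rfl

theorem exists_genPoly_piFinset_eq_mul (v : ι → ℤ) (C : ι → Finset ℤ) (i : ι) :
    ∃ g ∈ supported ℤ {i}, ∃ h ∈ supported ℤ {i}ᶜ, genPoly v (piFinset C) = g * h := by
  let P : ι → MvPolynomial ι ℤ := fun j => ∑ c ∈ C j, X j ^ (c - v j).toNat
  have hP : ∀ j, ∀ s : Set ι, j ∈ s → P j ∈ supported ℤ s :=
    fun j s hj => sum_mem fun c _ => pow_mem (X_mem_supported.2 hj) _
  refine ⟨P i, hP i {i} rfl, ∏ j ∈ univ.erase i, P j,
    prod_mem fun j hj => hP j _ (ne_of_mem_erase hj), ?_⟩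
  rw [genPoly_piFinset, mul_prod_erase univ P (mem_univ i)]

theorem IsTiling.update_mem {A B : Finset (ι → ℤ)} {C : ι → Finset ℤ}
    (h : IsTiling A B (piFinset C)) (hC : (piFinset C).Nonempty) (i : ι) {x y : ι → ℤ}
    (hx : x ∈ A) (hy : y ∈ A) : Function.update y i (x i) ∈ A := by
  obtain ⟨v, hv⟩ := A.bddBelow
  obtain ⟨w, hw⟩ := B.bddBelow
  have hmul := h.genPoly_mul hv hw
  have hne : genPoly (v + w) (piFinset C) ≠ 0 := by
    have hvw : v + w ∈ lowerBounds (piFinset C : Set (ι → ℤ)) := by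
      rw [← h.add_eq, Finset.coe_add]
      exact add_mem_lowerBounds_add hv hw
    obtain ⟨c, hc⟩ := hC
    exact support_nonempty.1 ⟨_, (shiftedExponent_mem_support_genPoly hvw (hvw hc)).2 hc⟩
  obtain ⟨g, hg, k, hk, hgk⟩ := exists_genPoly_piFinset_eq_mul (v + w) C i
  have hz : v ≤ Function.update y i (x i) :=
    le_update_iff.2 ⟨hv hx i, fun j _ => hv hy j⟩
  have hmix : shiftedExponent v (Function.update y i (x i)) =
      (shiftedExponent v x).filter (· ∈ ({i} : Set ι)) +
        (shiftedExponent v y).filter (· ∉ ({i} : Set ι)) := by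
    ext j
    obtain rfl | hji := eq_or_ne j i <;> simp [*]
  rw [← shiftedExponent_mem_support_genPoly hv hz, hmix]
  exact filter_add_filter_mem_support_of_dvd hg hk (hgk ▸ hne) (hgk ▸ hmul ▸ dvd_mul_right _ _)
    ((shiftedExponent_mem_support_genPoly hv (hv hx)).2 hx)
    ((shiftedExponent_mem_support_genPoly hv (hv hy)).2 hy)

theorem IsTiling.eq_piFinset_image {A B : Finset (ι → ℤ)} {C : ι → Finset ℤ}
    (h : IsTiling A B (piFinset C)) (hC : (piFinset C).Nonempty) :
    A = piFinset fun i => A.image (· i) :=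
  eq_piFinset_image_of_update_mem (h.nonempty_left hC) fun i _ hx _ hy => h.update_mem hC i hx hy

end GeneratingPolynomial

section BoxTilings

variable {ι : Type*} [Fintype ι] [DecidableEq ι]

theorem isTiling_piFinset_iff {G : ι → Type*} [∀ i, Add (G i)] [∀ i, DecidableEq (G i)]
    {A B C : ∀ i, Finset (G i)} (hC : ∀ i, (C i).Nonempty) :
    IsTiling (piFinset A) (piFinset B) (piFinset C) ↔ ∀ i, IsTiling (A i) (B i) (C i) := by
  constructor
  · intro h
    have hAB : ∀ i, (A i + B i).Nonempty := by
      rw [← Fintype.piFinset_nonempty, Fintype.piFinset_add, h.add_eq]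
      exact Fintype.piFinset_nonempty.2 hC
    have hadd : ∀ i, A i + B i = C i := congrFun <|
      piFinset_injOn_nonempty hAB hC ((Fintype.piFinset_add A B).trans h.add_eq)
    have hle : ∀ i, #(C i) ≤ #(A i) * #(B i) := fun i => hadd i ▸ card_add_le
    have hprod : ∏ i, #(C i) = ∏ i, #(A i) * #(B i) := by
      simpa only [Fintype.card_piFinset, prod_mul_distrib] using h.card_eq
    refine fun i => ⟨hadd i, (hle i).eq_of_not_lt fun hlt => hprod.not_lt ?_⟩
    exact prod_lt_prod (fun j _ => (hC j).card_pos) (fun j _ => hle j) ⟨i, mem_univ i, hlt⟩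
  · intro h
    refine ⟨?_, ?_⟩
    · simp only [← Fintype.piFinset_add, (h _).add_eq]
    · simp only [Fintype.card_piFinset, ← prod_mul_distrib, (h _).card_eq]

variable {C : ι → Finset ℤ}

theorem isTiling_piFinset_iff_exists (hC : ∀ i, (C i).Nonempty) {A B : Finset (ι → ℤ)} :
    IsTiling A B (piFinset C) ↔ ∃ As Bs : ι → Finset ℤ,
      (∀ i, IsTiling (As i) (Bs i) (C i)) ∧ A = piFinset As ∧ B = piFinset Bs := by
  refine ⟨fun h => ?_, ?_⟩
  · have hpi := Fintype.piFinset_nonempty.2 hC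
    have hA := h.eq_piFinset_image hpi
    have hB := h.symm.eq_piFinset_image hpi
    exact ⟨_, _, (isTiling_piFinset_iff hC).1 (hA ▸ hB ▸ h), hA, hB⟩
  · rintro ⟨As, Bs, h, rfl, rfl⟩
    exact (isTiling_piFinset_iff hC).2 h

theorem isTiling_piFinset_and_card_image_iff (hC : ∀ i, (C i).Nonempty) {α : ι → ℕ}
    {A B : Finset (ι → ℤ)} :
    (IsTiling A B (piFinset C) ∧ ∀ i, #(A.image (· i)) = α i) ↔ ∃ As Bs : ι → Finset ℤ,
      (∀ i, IsTiling (As i) (Bs i) (C i) ∧ #(As i) = α i) ∧ A = piFinset As ∧ B = piFinset Bs := by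
  have himage : ∀ As Bs : ι → Finset ℤ, (∀ i, IsTiling (As i) (Bs i) (C i)) →
      ∀ i, (piFinset As).image (· i) = As i := fun As Bs h i =>
    Fintype.eval_image_piFinset As i fun j _ => (h j).nonempty_left (hC j)
  rw [isTiling_piFinset_iff_exists hC]
  constructor
  · rintro ⟨⟨As, Bs, h, rfl, rfl⟩, hα⟩
    exact ⟨As, Bs, fun i => ⟨h i, himage As Bs h i ▸ hα i⟩, rfl, rfl⟩
  · rintro ⟨As, Bs, h, rfl, rfl⟩
    have htiling := fun i => (h i).1
    exact ⟨⟨As, Bs, htiling, rfl, rfl⟩, fun i => himage As Bs htiling i ▸ (h i).2⟩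

/-- The canonical tilings `T(α, C)` of a finite set of integers: the translation freedom of a
tiling `(A, B)` is removed by requiring `min B = 0`. -/
def canonicalTilings (α : ℕ) (C : Finset ℤ) : Set (Finset ℤ × Finset ℤ) :=
  {p | (IsTiling p.1 p.2 C ∧ #p.1 = α) ∧ IsLeast (p.2 : Set ℤ) 0}

/-- The canonical tilings `T((αᵢ), ∏ᵢ Cᵢ)` of a box, with the projection sizes of the first set
prescribed. Requiring `0` to be least in the product order is the condition that `0 ∈ B` and that
all coordinates of elements of `B` are nonnegative. -/
def canonicalBoxTilings (α : ι → ℕ) (C : ι → Finset ℤ) :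
    Set (Finset (ι → ℤ) × Finset (ι → ℤ)) :=
  {p | (IsTiling p.1 p.2 (piFinset C) ∧ ∀ i, #(p.1.image (· i)) = α i) ∧
    IsLeast (p.2 : Set (ι → ℤ)) 0}

theorem canonicalBoxTilings_eq_image (hC : ∀ i, (C i).Nonempty) (α : ι → ℕ) :
    canonicalBoxTilings α C =
      (fun p => (piFinset fun i => (p i).1, piFinset fun i => (p i).2)) ''
        Set.univ.pi fun i => canonicalTilings (α i) (C i) := by
  ext ⟨A, B⟩
  simp only [canonicalBoxTilings, canonicalTilings, Set.mem_ofPred_eq, Set.mem_image,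
    Set.mem_univ_pi, isTiling_piFinset_and_card_image_iff hC, Prod.mk.injEq]
  constructor
  · rintro ⟨⟨As, Bs, h, rfl, rfl⟩, hleast⟩
    exact ⟨fun i => (As i, Bs i), fun i => ⟨h i, isLeast_piFinset_iff.1 hleast i⟩, rfl, rfl⟩
  · rintro ⟨p, hp, rfl, rfl⟩
    exact ⟨⟨_, _, fun i => (hp i).1, rfl, rfl⟩, isLeast_piFinset_iff.2 fun i => (hp i).2⟩

theorem card_canonicalBoxTilings (hC : ∀ i, (C i).Nonempty) (α : ι → ℕ) :
    Nat.card (canonicalBoxTilings α C) = ∏ i, Nat.card (canonicalTilings (α i) (C i)) := by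
  rw [canonicalBoxTilings_eq_image hC, Nat.card_image_of_injOn,
    Nat.card_congr (Equiv.Set.univPi _), Nat.card_pi]
  intro p hp q hq hpq
  have htiling : ∀ r ∈ Set.univ.pi fun i => canonicalTilings (α i) (C i),
      ∀ i, IsTiling (r i).1 (r i).2 (C i) := fun r hr i => (hr i trivial).1.1
  obtain ⟨hfst, hsnd⟩ := Prod.mk.inj hpq
  funext i
  refine Prod.ext (congrFun (piFinset_injOn_nonempty ?_ ?_ hfst) i)
    (congrFun (piFinset_injOn_nonempty ?_ ?_ hsnd) i)
  · exact fun i => (htiling p hp i).nonempty_left (hC i)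
  · exact fun i => (htiling q hq i).nonempty_left (hC i)
  · exact fun i => (htiling p hp i).nonempty_right (hC i)
  · exact fun i => (htiling q hq i).nonempty_right (hC i)

theorem product_tilings_general (C : ι → Finset ℤ) (hC : ∀ i, (C i).Nonempty) (α : ι → ℕ) :
    (∀ A B : Finset (ι → ℤ),
      (IsTiling A B (piFinset C) ∧ ∀ i, #(A.image (· i)) = α i) ↔
        ∃ As Bs : ι → Finset ℤ, (∀ i, IsTiling (As i) (Bs i) (C i) ∧ #(As i) = α i) ∧
          A = piFinset As ∧ B = piFinset Bs) ∧
      Nat.card (canonicalBoxTilings α C) = ∏ i, Nat.card (canonicalTilings (α i) (C i)) :=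
  ⟨fun _ _ => isTiling_piFinset_and_card_image_iff hC, card_canonicalBoxTilings hC α⟩

end BoxTilings

theorem canT1_eq_canonicalTilings (α n : ℕ) : CanT1 α n = canonicalTilings α (Icc 1 n) := by
  ext p
  simp only [CanT1, canonicalTilings, isTiling_iff, IsLeast, mem_lowerBounds, Set.mem_ofPred_eq,
    SetLike.mem_coe]
  tauto

theorem canTd_eq_canonicalBoxTilings (d : ℕ) (nn α : Fin d → ℕ) :
    CanTd d nn α = canonicalBoxTilings α fun i => Icc 1 (nn i) := by
  ext p
  simp only [CanTd, canonicalBoxTilings, isTiling_iff, IsLeast, mem_lowerBounds, Pi.le_def,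
    Set.mem_ofPred_eq, SetLike.mem_coe, Pi.zero_apply]
  tauto

/-- A pair `(A,B)` tiles `C = C₁ × ⋯ × C_d` with projection sizes `α i` iff it is a
product of one-dimensional tilings; consequently the number of canonical tilings of `C`
is the product of the numbers of canonical tilings of the `C_i`. -/
theorem product_tilings (d : ℕ) (hd : 1 ≤ d) (nn : Fin d → ℕ) (hn : ∀ i, 0 < nn i)
    (α : Fin d → ℕ) :
    (∀ A B : Finset (Fin d → ℤ),
      (A + B = Fintype.piFinset (fun i => Finset.Icc 1 (nn i : ℤ)) ∧
       (∀ i, (A.image (fun x => x i)).card = α i) ∧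
       (Fintype.piFinset (fun i => Finset.Icc 1 (nn i : ℤ))).card = A.card * B.card) ↔
      (∃ As Bs : (i : Fin d) → Finset ℤ,
        (∀ i, As i + Bs i = Finset.Icc 1 (nn i : ℤ) ∧ (As i).card = α i ∧
          (As i).card * (Bs i).card = nn i) ∧
        A = Fintype.piFinset As ∧ B = Fintype.piFinset Bs)) ∧
    Nat.card (CanTd d nn α) = ∏ i, Nat.card (CanT1 (α i) (nn i)) := by
  have hC : ∀ i, (Icc 1 (nn i : ℤ)).Nonempty := fun i => nonempty_Icc.2 (mod_cast hn i)
  obtain ⟨htilings, hcard⟩ := product_tilings_general _ hC α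
  refine ⟨fun A B => ?_, ?_⟩
  · simpa only [isTiling_iff, Int.card_Icc, add_sub_cancel_right, Int.toNat_natCast, and_assoc,
      and_comm, and_left_comm, eq_comm (a := nn _)] using htilings A B
  · simpa only [canTd_eq_canonicalBoxTilings, canT1_eq_canonicalTilings] using hcard
end

section
/- Let (A,B) be any canonical tiling of [1,n] with |A| = α. Then for every α' ∈ ℤ⁺, the number of canonical tilings of the set A by tiles of size α' is at most the number of canonical tilings of the interval [1,α] by tiles of size α': |T(α', A)| ≤ |T(α', [1,α])|. -/
open Finset Pointwise

/-- Canonical tilings of a finite set `C ⊆ ℤ` with tile size `α`. -/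
def CanT (α : ℕ) (C : Finset ℤ) : Set (Finset ℤ × Finset ℤ) :=
  {p | p.1 + p.2 = C ∧ p.1.card = α ∧ C.card = p.1.card * p.2.card ∧
    (0 : ℤ) ∈ p.2 ∧ ∀ b ∈ p.2, 0 ≤ b}

/-!
Translate `A` so that it starts at `0`. Then in every canonical tiling `(P, Q)` of `A` both `P` and
`Q` are subsets of `A`, so a bijection `A → [0, α)` that is additive wherever `x`, `y` and
`x + y` all lie in `A` carries canonical tilings of `A` injectively to canonical tilings of
`[0, α)`. The order isomorphism `x ↦ #{a ∈ A | a < x}` is such a map.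

Its additivity rests on de Bruijn's description of tilings `A ⊕ B` of an initial segment of `ℕ`:
if `m` is the least positive element of `B`, then `B` consists of multiples of `m` and `A` is a
union of blocks `[m * k, m * k + m)`, so dividing by `m` leaves a smaller tiling of the same kind,
and the roles of `A` and `B` are symmetric. When `A` is a union of blocks, adding two elements of
`A` within `A` produces no carry modulo `m`: the quotient of `A` is either `{0}` or contained in
the multiples of some `p > 1`, hence does not contain `i + j + 1` together with `i` and `j`.
-/

/-- `A + B` is an initial segment of `ℕ` (finite or all of `ℕ`) and each of its elements is a sum
`a + b` in only one way. The two conditions on `0` exclude the empty segment. -/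
structure TilesInitialSegment (A B : Set ℕ) : Prop where
  zero_mem_left : 0 ∈ A
  zero_mem_right : 0 ∈ B
  isLowerSet_add : IsLowerSet (A + B)
  injOn_add : (A ×ˢ B).InjOn fun p ↦ p.1 + p.2

/-- The multiples of `m` in `A`, divided by `m`; contracting both tiles of a tiling of an initial
segment gives a smaller such tiling. -/
def contraction (m : ℕ) (A : Set ℕ) : Set ℕ :=
  {k | m * k ∈ A}

theorem mem_contraction {m k : ℕ} {A : Set ℕ} : k ∈ contraction m A ↔ m * k ∈ A :=
  Iff.rfl

/-- Compatibility of a tiling with the block `[x, x + m)`: `A` contains all of it or none of it, and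
`B` contains at most its left endpoint. -/
structure AlignedAt (A B : Set ℕ) (m x : ℕ) : Prop where
  mem_left_iff : ∀ j < m, x + j ∈ A ↔ x ∈ A
  mem_right_imp : ∀ j < m, x + j ∈ B → j = 0

theorem AlignedAt.dvd_of_mem_right {A B : Set ℕ} {m b : ℕ} (h : AlignedAt A B m (m * (b / m)))
    (hm : 0 < m) (hb : b ∈ B) : m ∣ b :=
  Nat.dvd_of_mod_eq_zero <|
    h.mem_right_imp _ (Nat.mod_lt _ hm) (by rwa [Nat.div_add_mod])

open Classical in
/-- The number of elements of `A` below `x`; on `A` itself this is the order isomorphism onto an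
initial segment of `ℕ`. -/
noncomputable def countBelow (A : Set ℕ) (x : ℕ) : ℕ :=
  Nat.count (· ∈ A) x

theorem exists_isLeast_pos {A : Set ℕ} {a : ℕ} (ha : a ∈ A) (ha₀ : 0 < a) :
    ∃ m, IsLeast {x ∈ A | 0 < x} m :=
  ⟨_, Nat.sInf_mem ⟨a, ha, ha₀⟩, fun _ hx ↦ Nat.sInf_le hx⟩

section CountBelow

variable {A : Set ℕ} {m : ℕ}

theorem countBelow_zero (A : Set ℕ) : countBelow A 0 = 0 := by
  classical exact Nat.count_zero _

theorem injOn_countBelow (A : Set ℕ) : A.InjOn (countBelow A) := by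
  classical exact fun _ hx _ hy hxy ↦ Nat.count_injective hx hy hxy

theorem countBelow_lt_ncard (hA : A.Finite) {x : ℕ} (hx : x ∈ A) : countBelow A x < A.ncard := by
  classical
  rw [Set.ncard_eq_toFinset_card A hA]
  exact Nat.count_lt_card (p := (· ∈ A)) hA hx

theorem countBelow_eq_self (hA : IsLowerSet A) {x : ℕ} (hx : x ∈ A) : countBelow A x = x := by
  classical exact Nat.count_of_forall fun _ hy ↦ hA hy.le hx

theorem countBelow_mul_of_forall_dvd (hm : 0 < m) (hA : ∀ a ∈ A, m ∣ a) (k : ℕ) :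
    countBelow A (m * k) = countBelow (contraction m A) k := by
  classical
  simp only [countBelow, Nat.count_eq_card_filter_range]
  rw [← card_image_of_injective {x ∈ range k | x ∈ contraction m A} (mul_right_injective₀ hm.ne')]
  congr 1
  ext x
  simp only [mem_filter, mem_range, mem_image, mem_contraction]
  constructor
  · rintro ⟨hlt, hx⟩
    obtain ⟨i, rfl⟩ := hA x hx
    exact ⟨i, ⟨lt_of_mul_lt_mul_left hlt m.zero_le, hx⟩, rfl⟩
  · rintro ⟨i, ⟨hlt, hi⟩, rfl⟩
    exact ⟨Nat.mul_lt_mul_of_pos_left hlt hm, hi⟩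

theorem countBelow_mul_add (hA : ∀ k, ∀ j < m, m * k + j ∈ A ↔ m * k ∈ A) {k j : ℕ}
    (hk : m * k ∈ A) (hj : j < m) :
    countBelow A (m * k + j) = m * countBelow (contraction m A) k + j := by
  classical
  have count_blocks : ∀ i, countBelow A (m * i) = m * countBelow (contraction m A) i := by
    intro i
    induction i with
    | zero => simp [countBelow_zero]
    | succ i ih =>
      simp only [countBelow, mem_contraction, Nat.mul_succ, Nat.count_add, Nat.count_succ] at ih ⊢
      rw [ih, mul_add]
      congr 1
      split_ifs with hi
      · rw [mul_one, Nat.count_of_forall fun j hj ↦ (hA i j hj).2 hi]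
      · rw [mul_zero, Nat.count_of_forall_not fun j hj hij ↦ hi ((hA i j hj).1 hij)]
  rw [← count_blocks, countBelow, Nat.count_add, countBelow,
    Nat.count_of_forall fun i hi ↦ (hA k i (hi.trans hj)).2 hk]

end CountBelow

namespace TilesInitialSegment

variable {A B : Set ℕ} {m : ℕ}

theorem eq_and_eq_of_add_eq_add (h : TilesInitialSegment A B) {a b a' b' : ℕ} (ha : a ∈ A)
    (hb : b ∈ B) (ha' : a' ∈ A) (hb' : b' ∈ B) (hab : a + b = a' + b') : a = a' ∧ b = b' :=
  Prod.mk.inj (h.injOn_add (Set.mk_mem_prod ha hb) (Set.mk_mem_prod ha' hb') hab)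

theorem symm (h : TilesInitialSegment A B) : TilesInitialSegment B A where
  zero_mem_left := h.zero_mem_right
  zero_mem_right := h.zero_mem_left
  isLowerSet_add := add_comm A B ▸ h.isLowerSet_add
  injOn_add := by
    rintro ⟨b, a⟩ ⟨hb, ha⟩ ⟨b', a'⟩ ⟨hb', ha'⟩ hab
    have := h.eq_and_eq_of_add_eq_add ha hb ha' hb' (by simpa only [add_comm] using hab)
    exact Prod.ext this.2 this.1

theorem exists_add_eq (h : TilesInitialSegment A B) {a b x : ℕ} (ha : a ∈ A) (hb : b ∈ B)
    (hx : x ≤ a + b) : ∃ a' ∈ A, ∃ b' ∈ B, a' + b' = x :=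
  Set.mem_add.1 (h.isLowerSet_add hx (Set.add_mem_add ha hb))

theorem one_notMem_left (h : TilesInitialSegment A B) (h1 : 1 ∈ B) : 1 ∉ A := fun h1A ↦ by
  have := h.eq_and_eq_of_add_eq_add h1A h.zero_mem_right h.zero_mem_left h1 rfl
  omega

theorem mem_left_of_lt (h : TilesInitialSegment A B) (hm : IsLeast {b ∈ B | 0 < b} m) {j : ℕ}
    (hj : j < m) : j ∈ A := by
  obtain ⟨a, ha, b, hb, rfl⟩ := h.exists_add_eq h.zero_mem_left hm.1.1 (x := j) (by omega)
  have hb0 : b = 0 := by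
    by_contra hb0
    have := hm.2 ⟨hb, Nat.pos_of_ne_zero hb0⟩
    omega
  rwa [hb0]

theorem isLowerSet_left (h : TilesInitialSegment A B) (hB : ∀ b ∈ B, b = 0) : IsLowerSet A := by
  intro x y hyx hx
  obtain ⟨a, ha, b, hb, rfl⟩ := h.exists_add_eq hx h.zero_mem_right hyx
  rwa [hB b hb]

theorem alignedAt_of_mem (h : TilesInitialSegment A B) (hm : IsLeast {b ∈ B | 0 < b} m) {x : ℕ}
    (hx : m ∣ x) (ih : ∀ y < x, m ∣ y → AlignedAt A B m y)
    (hdvd : ∀ b ∈ B, b ≤ x → m ∣ b) (hxA : x ∈ A) : AlignedAt A B m x := by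
  have hB : ∀ j < m, x + j ∈ B → j = 0 := by
    intro j hj hxj
    by_contra hj0
    -- `x + m` would also be represented as `(m - j) + (x + j)`.
    have := h.eq_and_eq_of_add_eq_add (h.mem_left_of_lt hm (j := m - j) (by omega)) hxj hxA
      hm.1.1 (by omega)
    have := Nat.le_of_dvd (by omega) hx
    omega
  refine ⟨fun j hj ↦ iff_of_true ?_ hxA, hB⟩
  obtain ⟨a, ha, b, hb, hab⟩ := h.exists_add_eq hxA hm.1.1 (x := x + j) (by omega)
  have hbx : b ≤ x := by
    by_contra hxb
    have := hB (b - x) (by omega) (by rwa [Nat.add_sub_cancel' (by omega)])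
    omega
  have hb0 : b = 0 := by
    by_contra hb0
    have aligned := ih (x - b) (by omega) (Nat.dvd_sub hx (hdvd b hb hbx))
    have hxb : x - b ∈ A := (aligned.mem_left_iff j hj).1 (by convert ha using 1; omega)
    have := h.eq_and_eq_of_add_eq_add hxb hb hxA h.zero_mem_right (by omega)
    omega
  rwa [← hab, hb0]

theorem alignedAt_of_notMem (h : TilesInitialSegment A B) {x : ℕ}
    (hx : m ∣ x) (ih : ∀ y < x, m ∣ y → AlignedAt A B m y)
    (hdvd : ∀ b ∈ B, b ≤ x → m ∣ b) (hxA : x ∉ A) : AlignedAt A B m x := by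
  by_cases hxAB : x ∈ A + B
  · obtain ⟨a, ha, b, hb, rfl⟩ := Set.mem_add.1 hxAB
    have hb0 : b ≠ 0 := by rintro rfl; exact hxA ha
    have hma : m ∣ a := (Nat.dvd_add_left (hdvd b hb (by omega))).1 hx
    have block : ∀ j < m, a + j ∈ A := fun j hj ↦
      ((ih a (by omega) hma).mem_left_iff j hj).2 ha
    constructor
    · refine fun j hj ↦ iff_of_false (fun hA ↦ ?_) hxA
      have := h.eq_and_eq_of_add_eq_add (block j hj) hb hA h.zero_mem_right (by omega)
      omega
    · intro j hj hB
      have := h.eq_and_eq_of_add_eq_add (block j hj) hb h.zero_mem_left hB (by omega)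
      omega
  · have hxj : ∀ j, x + j ∉ A + B := fun j hj ↦ hxAB (h.isLowerSet_add (by omega) hj)
    constructor
    · exact fun j _ ↦ iff_of_false
        (fun hA ↦ hxj j (by simpa using Set.add_mem_add hA h.zero_mem_right)) hxA
    · exact fun j _ hB ↦
        absurd (by simpa using Set.add_mem_add h.zero_mem_left hB) (hxj j)

theorem alignedAt (h : TilesInitialSegment A B) (hm : IsLeast {b ∈ B | 0 < b} m) {x : ℕ}
    (hx : m ∣ x) : AlignedAt A B m x := by
  induction x using Nat.strong_induction_on with
  | _ x ih =>
    have hdvd : ∀ b ∈ B, b ≤ x → m ∣ b := by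
      intro b hb hbx
      rcases hbx.eq_or_lt with rfl | hbx
      · exact hx
      · have aligned := ih (m * (b / m)) ((Nat.mul_div_le b m).trans_lt hbx) (dvd_mul_right _ _)
        exact aligned.dvd_of_mem_right hm.1.2 hb
    by_cases hxA : x ∈ A
    · exact h.alignedAt_of_mem hm hx ih hdvd hxA
    · exact h.alignedAt_of_notMem hx ih hdvd hxA

theorem dvd_of_mem_right (h : TilesInitialSegment A B) (hm : IsLeast {b ∈ B | 0 < b} m) {b : ℕ}
    (hb : b ∈ B) : m ∣ b :=
  (h.alignedAt hm (dvd_mul_right m (b / m))).dvd_of_mem_right hm.1.2 hb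

theorem mul_add_mem_left_iff (h : TilesInitialSegment A B) (hm : IsLeast {b ∈ B | 0 < b} m)
    (k : ℕ) {j : ℕ} (hj : j < m) : m * k + j ∈ A ↔ m * k ∈ A :=
  (h.alignedAt hm (dvd_mul_right m k)).mem_left_iff j hj

theorem div_mem_contraction_left_iff (h : TilesInitialSegment A B)
    (hm : IsLeast {b ∈ B | 0 < b} m) {a : ℕ} : a / m ∈ contraction m A ↔ a ∈ A := by
  rw [mem_contraction, ← h.mul_add_mem_left_iff hm _ (Nat.mod_lt a hm.1.2), Nat.div_add_mod]

theorem contract (h : TilesInitialSegment A B) (hm : IsLeast {b ∈ B | 0 < b} m) :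
    TilesInitialSegment (contraction m A) (contraction m B) where
  zero_mem_left := h.zero_mem_left
  zero_mem_right := h.zero_mem_right
  isLowerSet_add := by
    rintro _ y hy ⟨a, ha, b, hb, rfl⟩
    obtain ⟨a', ha', b', hb', hab⟩ := h.exists_add_eq ha hb (x := m * y)
      (by rw [← mul_add]; exact Nat.mul_le_mul_left m hy)
    obtain ⟨j, rfl⟩ := h.dvd_of_mem_right hm hb'
    obtain ⟨i, rfl⟩ : m ∣ a' := (Nat.dvd_add_left (dvd_mul_right m j)).1 (hab ▸ dvd_mul_right m y)
    exact ⟨i, ha', j, hb', Nat.eq_of_mul_eq_mul_left hm.1.2 (by rw [mul_add, hab])⟩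
  injOn_add := by
    rintro ⟨a, b⟩ ⟨ha, hb⟩ ⟨a', b'⟩ ⟨ha', hb'⟩ hab
    have := h.eq_and_eq_of_add_eq_add ha hb ha' hb' (by simp only [← mul_add]; exact congrArg _ hab)
    exact Prod.ext (Nat.eq_of_mul_eq_mul_left hm.1.2 this.1)
      (Nat.eq_of_mul_eq_mul_left hm.1.2 this.2)

theorem add_add_one_notMem_left (h : TilesInitialSegment A B) (h1 : 1 ∈ B) {a b : ℕ} (ha : a ∈ A)
    (hb : b ∈ A) : a + b + 1 ∉ A := fun hab ↦ by
  obtain ⟨p, hp⟩ := exists_isLeast_pos hab (Nat.succ_pos _)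
  have hdvd : ∀ {x}, x ∈ A → p ∣ x := h.symm.dvd_of_mem_right hp
  have hp1 : p = 1 :=
    Nat.dvd_one.1 ((Nat.dvd_add_right (dvd_add (hdvd ha) (hdvd hb))).1 (hdvd hab))
  exact h.one_notMem_left h1 (hp1 ▸ hp.1.1)

theorem mod_add_mod_lt_of_mem_left (h : TilesInitialSegment A B) (hm : IsLeast {b ∈ B | 0 < b} m)
    {a b : ℕ} (ha : a ∈ A) (hb : b ∈ A) (hab : a + b ∈ A) : a % m + b % m < m := by
  by_contra! carry
  have h1 : 1 ∈ contraction m B := by simpa [mem_contraction] using hm.1.1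
  refine (h.contract hm).add_add_one_notMem_left h1 ((h.div_mem_contraction_left_iff hm).2 ha)
    ((h.div_mem_contraction_left_iff hm).2 hb) ?_
  rw [← Nat.add_div_eq_of_le_mod_add_mod carry hm.1.2]
  exact (h.div_mem_contraction_left_iff hm).2 hab

theorem countBelow_eq_of_mem_left (h : TilesInitialSegment A B)
    (hm : IsLeast {b ∈ B | 0 < b} m) {a : ℕ} (ha : a ∈ A) :
    countBelow A a = m * countBelow (contraction m A) (a / m) + a % m := by
  conv_lhs => rw [← Nat.div_add_mod a m]
  exact countBelow_mul_add (fun k _ ↦ h.mul_add_mem_left_iff hm k)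
    ((h.div_mem_contraction_left_iff hm).2 ha) (Nat.mod_lt a hm.1.2)

theorem countBelow_add (h : TilesInitialSegment A B) {a b : ℕ} (ha : a ∈ A) (hb : b ∈ A)
    (hab : a + b ∈ A) : countBelow A (a + b) = countBelow A a + countBelow A b := by
  induction hs : a + b using Nat.strong_induction_on generalizing A B a b with
  | _ s ih =>
    subst hs
    rcases Nat.eq_zero_or_pos (a + b) with h0 | hpos
    · obtain ⟨rfl, rfl⟩ := Nat.add_eq_zero_iff.1 h0
      simp [countBelow_zero]
    by_cases h1 : 1 ∈ B
    · obtain ⟨p, hp⟩ := exists_isLeast_pos hab hpos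
      have hp1 : 1 < p := lt_of_le_of_ne hp.1.2 (by rintro rfl; exact h.one_notMem_left h1 hp.1.1)
      have hdvd : ∀ x ∈ A, p ∣ x := fun _ ↦ h.symm.dvd_of_mem_right hp
      obtain ⟨⟨a, rfl⟩, ⟨b, rfl⟩⟩ := And.intro (hdvd a ha) (hdvd b hb)
      rw [← mul_add] at hab hpos ih ⊢
      simp only [countBelow_mul_of_forall_dvd hp.1.2 hdvd]
      have hlt : a + b < p * (a + b) := lt_mul_left (Nat.pos_of_mul_pos_left hpos) hp1
      exact ih (a + b) hlt (h.symm.contract hp).symm ha hb hab rfl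
    by_cases hB : ∀ b ∈ B, b = 0
    · simp only [countBelow_eq_self (h.isLowerSet_left hB), ha, hb, hab]
    push Not at hB
    obtain ⟨b₀, hb₀, hb₀_ne⟩ := hB
    obtain ⟨m, hm⟩ := exists_isLeast_pos hb₀ (Nat.pos_of_ne_zero hb₀_ne)
    have hm1 : 1 < m := lt_of_le_of_ne hm.1.2 (by rintro rfl; exact h1 hm.1.1)
    have hmod := h.mod_add_mod_lt_of_mem_left hm ha hb hab
    have hdiv := Nat.add_div_eq_of_add_mod_lt hmod
    have ih_div := ih ((a + b) / m) (Nat.div_lt_self hpos hm1) (h.contract hm)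
      ((h.div_mem_contraction_left_iff hm).2 ha) ((h.div_mem_contraction_left_iff hm).2 hb)
      (hdiv ▸ (h.div_mem_contraction_left_iff hm).2 hab) hdiv.symm
    rw [h.countBelow_eq_of_mem_left hm hab, h.countBelow_eq_of_mem_left hm ha,
      h.countBelow_eq_of_mem_left hm hb, ih_div, Nat.add_mod_of_add_mod_lt hmod]
    ring

end TilesInitialSegment

namespace CanT

variable {α : ℕ} {C P Q : Finset ℤ}

theorem left_subset (h : (P, Q) ∈ CanT α C) : P ⊆ C := fun x hx ↦ by
  simpa [h.1] using add_mem_add hx h.2.2.2.1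

theorem nonneg_right (h : (P, Q) ∈ CanT α C) {b : ℤ} (hb : b ∈ Q) : 0 ≤ b :=
  h.2.2.2.2 b hb

theorem nonneg_left {n a : ℤ} (h : (P, Q) ∈ CanT α (Ico 0 n)) (ha : a ∈ P) : 0 ≤ a :=
  (mem_Ico.1 (left_subset h ha)).1

theorem injOn_add (h : (P, Q) ∈ CanT α C) : (P ×ˢ Q : Set (ℤ × ℤ)).InjOn fun p ↦ p.1 + p.2 :=
  card_add_iff.1 (by rw [h.1]; exact h.2.2.1)

theorem zero_mem_left (h : (P, Q) ∈ CanT α C) (hC : ∀ x ∈ C, 0 ≤ x) (h0 : 0 ∈ C) : 0 ∈ P := by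
  obtain ⟨a, ha, b, hb, hab⟩ := mem_add.1 (h.1.symm ▸ h0)
  have ha0 : 0 ≤ a := hC a (left_subset h ha)
  have hb0 : 0 ≤ b := nonneg_right h hb
  rwa [show a = 0 by omega] at ha

theorem right_subset (h : (P, Q) ∈ CanT α C) (hC : ∀ x ∈ C, 0 ≤ x) (h0 : 0 ∈ C) : Q ⊆ C :=
  fun x hx ↦ by simpa [h.1] using add_mem_add (zero_mem_left h hC h0) hx

theorem subset_powerset_product (hC : ∀ x ∈ C, 0 ≤ x) (h0 : 0 ∈ C) :
    CanT α C ⊆ C.powerset ×ˢ C.powerset := fun _ h ↦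
  ⟨mem_powerset.2 (left_subset h), mem_powerset.2 (right_subset h hC h0)⟩

theorem vadd_mem_vadd_iff {t : ℤ} : (t +ᵥ P, Q) ∈ CanT α (t +ᵥ C) ↔ (P, Q) ∈ CanT α C := by
  simp [CanT, vadd_add_assoc]

theorem card_vadd (α : ℕ) (t : ℤ) (C : Finset ℤ) :
    Nat.card (CanT α (t +ᵥ C)) = Nat.card (CanT α C) :=
  (Nat.card_congr <| ((AddAction.toPerm t).prodCongr (.refl _)).subtypeEquiv
    fun _ ↦ vadd_mem_vadd_iff.symm).symm

theorem image_mem {g : ℤ → ℤ} (h : (P, Q) ∈ CanT α C) (hC : ∀ x ∈ C, 0 ≤ x) (h0 : 0 ∈ C)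
    (g_inj : (C : Set ℤ).InjOn g) (g_add : ∀ x ∈ C, ∀ y ∈ C, x + y ∈ C → g (x + y) = g x + g y)
    (g_nonneg : ∀ x ∈ C, 0 ≤ g x) : (P.image g, Q.image g) ∈ CanT α (C.image g) := by
  have hP : P ⊆ C := left_subset h
  have hQ : Q ⊆ C := right_subset h hC h0
  have g_zero : g 0 = 0 := by simpa using g_add 0 h0 0 h0 (by simpa using h0)
  obtain ⟨rfl, card_P, card_add, hQ0, -⟩ := h
  have card_image_P : (P.image g).card = P.card := card_image_of_injOn (g_inj.mono (mod_cast hP))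
  have card_image_Q : (Q.image g).card = Q.card := card_image_of_injOn (g_inj.mono (mod_cast hQ))
  have image_add : (P + Q).image g = P.image g + Q.image g := by
    ext y
    simp only [mem_add, mem_image]
    constructor
    · rintro ⟨_, ⟨a, ha, b, hb, rfl⟩, rfl⟩
      exact ⟨_, ⟨a, ha, rfl⟩, _, ⟨b, hb, rfl⟩,
        (g_add a (hP ha) b (hQ hb) (add_mem_add ha hb)).symm⟩
    · rintro ⟨_, ⟨a, ha, rfl⟩, _, ⟨b, hb, rfl⟩, rfl⟩
      exact ⟨_, ⟨a, ha, b, hb, rfl⟩, g_add a (hP ha) b (hQ hb) (add_mem_add ha hb)⟩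
  refine ⟨image_add.symm, card_image_P.trans card_P, ?_, mem_image.2 ⟨0, hQ0, g_zero⟩,
    forall_mem_image.2 fun b hb ↦ g_nonneg b (hQ hb)⟩
  rw [card_image_of_injOn g_inj, card_image_P, card_image_Q, card_add]

theorem card_le_card_image {g : ℤ → ℤ} (hC : ∀ x ∈ C, 0 ≤ x) (h0 : 0 ∈ C)
    (g_inj : (C : Set ℤ).InjOn g) (g_add : ∀ x ∈ C, ∀ y ∈ C, x + y ∈ C → g (x + y) = g x + g y)
    (g_nonneg : ∀ x ∈ C, 0 ≤ g x) (α : ℕ) :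
    Nat.card (CanT α C) ≤ Nat.card (CanT α (C.image g)) := by
  have g_zero : g 0 = 0 := by simpa using g_add 0 h0 0 h0 (by simpa using h0)
  have finite_canT_image : (CanT α (C.image g)).Finite :=
    (finite_toSet (_ ×ˢ _)).subset <| coe_product _ _ ▸ subset_powerset_product
      (forall_mem_image.2 g_nonneg) (mem_image.2 ⟨0, h0, g_zero⟩)
  have image_inj := image_injOn_powerset_of_injOn g_inj
  exact Set.ncard_le_ncard_of_injOn (Prod.map (image g) (image g))
    (fun _ h ↦ image_mem h hC h0 g_inj g_add g_nonneg)
    ((image_inj.prodMap image_inj).mono (subset_powerset_product hC h0)) finite_canT_image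

theorem zero_mem_Ico_of_nonempty {n : ℤ} (h : (P, Q) ∈ CanT α (Ico 0 n)) (hP : P.Nonempty) :
    0 ∈ Ico 0 n := by
  obtain ⟨a, ha⟩ := hP
  have := mem_Ico.1 (left_subset h ha)
  exact mem_Ico.2 (by omega)

theorem tilesInitialSegment {n : ℤ} (h : (P, Q) ∈ CanT α (Ico 0 n)) (hP : P.Nonempty) :
    TilesInitialSegment ((↑) ⁻¹' (P : Set ℤ)) ((↑) ⁻¹' (Q : Set ℤ)) where
  zero_mem_left :=
    zero_mem_left h (fun _ hx ↦ (mem_Ico.1 hx).1) (zero_mem_Ico_of_nonempty h hP)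
  zero_mem_right := h.2.2.2.1
  isLowerSet_add := by
    rintro _ y hy ⟨a, ha, b, hb, rfl⟩
    have hab : (a + b : ℤ) < n := (mem_Ico.1 (h.1 ▸ add_mem_add ha hb)).2
    have hyn : (y : ℤ) ∈ P + Q := h.1 ▸ mem_Ico.2 (by dsimp only at hy; omega)
    obtain ⟨a', ha', b', hb', hab'⟩ := mem_add.1 hyn
    lift a' to ℕ using nonneg_left h ha'
    lift b' to ℕ using nonneg_right h hb'
    exact ⟨a', ha', b', hb', mod_cast hab'⟩
  injOn_add := by
    rintro ⟨a, b⟩ ⟨ha, hb⟩ ⟨a', b'⟩ ⟨ha', hb'⟩ hab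
    have hab' : (a + b : ℤ) = a' + b' := mod_cast hab
    simpa using injOn_add h (Set.mk_mem_prod ha hb) (Set.mk_mem_prod ha' hb') hab'

end CanT

/-- `countBelow` for a set `A` of nonnegative integers: the number of elements of `A` in `[0, x)`.
It is integer-valued so that images under it are again subsets of `ℤ`. -/
noncomputable def intCountBelow (A : Finset ℤ) (x : ℤ) : ℤ :=
  countBelow ((↑) ⁻¹' (A : Set ℤ)) x.toNat

section IntCountBelow

variable {A : Finset ℤ}

theorem toNat_mem_preimage (hA : ∀ x ∈ A, 0 ≤ x) {x : ℤ} (hx : x ∈ A) :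
    x.toNat ∈ ((↑) ⁻¹' (A : Set ℤ) : Set ℕ) := by
  simpa [Int.toNat_of_nonneg (hA x hx)] using hx

theorem injOn_intCountBelow (hA : ∀ x ∈ A, 0 ≤ x) : (A : Set ℤ).InjOn (intCountBelow A) := by
  intro x hx y hy hxy
  have toNat_eq : x.toNat = y.toNat := injOn_countBelow _ (toNat_mem_preimage hA hx)
    (toNat_mem_preimage hA hy) (Nat.cast_injective hxy)
  rw [← Int.toNat_of_nonneg (hA x hx), ← Int.toNat_of_nonneg (hA y hy), toNat_eq]

theorem intCountBelow_lt_card (hA : ∀ x ∈ A, 0 ≤ x) {x : ℤ} (hx : x ∈ A) :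
    intCountBelow A x < A.card := by
  have ncard_preimage : ((↑) ⁻¹' (A : Set ℤ) : Set ℕ).ncard = A.card := by
    rw [Set.ncard_preimage_of_injective_subset_range Nat.cast_injective
      fun x hx ↦ ⟨x.toNat, Int.toNat_of_nonneg (hA x hx)⟩, Set.ncard_coe_finset]
  rw [intCountBelow, ← ncard_preimage, Nat.cast_lt]
  exact countBelow_lt_ncard (A.finite_toSet.preimage Nat.cast_injective.injOn)
    (toNat_mem_preimage hA hx)

theorem image_intCountBelow (hA : ∀ x ∈ A, 0 ≤ x) :
    A.image (intCountBelow A) = Ico 0 (A.card : ℤ) := by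
  apply eq_of_subset_of_card_le
  · exact image_subset_iff.2 fun x hx ↦
      mem_Ico.2 ⟨Nat.cast_nonneg _, intCountBelow_lt_card hA hx⟩
  · rw [card_image_of_injOn (injOn_intCountBelow hA), Int.card_Ico, sub_zero, Int.toNat_natCast]

theorem CanT.intCountBelow_add {α : ℕ} {n : ℤ} {B : Finset ℤ} (h : (A, B) ∈ CanT α (Ico 0 n))
    {x y : ℤ} (hx : x ∈ A) (hy : y ∈ A) (hxy : x + y ∈ A) :
    intCountBelow A (x + y) = intCountBelow A x + intCountBelow A y := by
  have hA : ∀ x ∈ A, 0 ≤ x := fun _ ↦ nonneg_left h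
  have toNat_add := Int.toNat_add (hA x hx) (hA y hy)
  have hxy' := toNat_mem_preimage hA hxy
  rw [toNat_add] at hxy'
  rw [intCountBelow, toNat_add, (tilesInitialSegment h ⟨x, hx⟩).countBelow_add
    (toNat_mem_preimage hA hx) (toNat_mem_preimage hA hy) hxy', Nat.cast_add]
  rfl

theorem CanT.card_le_card_Ico {α : ℕ} {n : ℤ} {B : Finset ℤ} (h : (A, B) ∈ CanT α (Ico 0 n))
    (α' : ℕ) : Nat.card (CanT α' A) ≤ Nat.card (CanT α' (Ico 0 (α : ℤ))) := by
  have hA : ∀ x ∈ A, 0 ≤ x := fun _ ↦ nonneg_left h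
  rw [← h.2.1, ← image_intCountBelow hA]
  rcases A.eq_empty_or_nonempty with rfl | hne
  · rw [image_empty]
  · exact card_le_card_image hA (tilesInitialSegment h hne).zero_mem_left (injOn_intCountBelow hA)
      (fun _ hx _ hy ↦ intCountBelow_add h hx hy) (fun _ _ ↦ Nat.cast_nonneg _) α'

end IntCountBelow

/-- If `(A,B)` is a canonical tiling of `[1,n]` with `|A| = α`, then for every tile size
`α'` the set `A` has at most as many canonical tilings as the interval `[1,α]`. -/
theorem tile_has_fewer_tilings_than_interval (n α : ℕ) (A B : Finset ℤ)
    (h : (A, B) ∈ CanT α (Finset.Icc 1 (n : ℤ))) :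
    ∀ α' : ℕ, 0 < α' →
      Nat.card (CanT α' A) ≤ Nat.card (CanT α' (Finset.Icc 1 (α : ℤ))) := by
  intro α' _
  have vadd_Ico (k : ℕ) : (1 : ℤ) +ᵥ Ico 0 (k : ℤ) = Icc 1 (k : ℤ) := by
    ext x
    simp only [mem_vadd_finset, vadd_eq_add, mem_Ico, mem_Icc]
    exact ⟨by omega, fun hx ↦ ⟨x - 1, by omega⟩⟩
  have h' : (-1 +ᵥ A, B) ∈ CanT α (Ico 0 (n : ℤ)) := by
    rwa [← CanT.vadd_mem_vadd_iff (t := 1), vadd_neg_vadd, vadd_Ico]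
  rw [← vadd_Ico, CanT.card_vadd, ← CanT.card_vadd α' (-1) A]
  exact CanT.card_le_card_Ico h' α'
end
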